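/- arXiv:2010.01881 — 5 statements merged into one kernel-verified Lean document; each statement's English description precedes it below -/
import Mathlib

section
/- Let c be a point of the Euclidean plane ℝ² and let S be a finite set of points such that every point of S is at distance exactly 2 from c, and any two distinct points of S are at distance at least 2 from each other. Then S has at most 6 elements. (Equivalently: a unit disk can touch at most 6 pairwise internally disjoint unit disks; the planar kissing number is 6.) -/
/-!
Seven directions in the plane cannot be spread out: cutting the circle into six half-open sectors of
opening `π / 3`, two of the directions share a sector, so they form an angle less than `π / 3`. In a
triangle the side opposite such an angle is shorter than the longer of the other two sides. Hence
two of any seven points other than `c` are closer to each other than one of them is to `c`.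
-/

open InnerProductGeometry Module Set
open scoped Real

theorem exists_ne_abs_sub_lt_of_lt_encard {ι K : Type*} [Field K] [LinearOrder K]
    [IsStrictOrderedRing K] [FloorRing K] {s : Set ι} {f : ι → K} {n : ℕ} {a δ : K} (hδ : 0 < δ)
    (hf : ∀ i ∈ s, f i ∈ Ico a (a + n * δ)) (hn : n < s.encard) :
    ∃ i ∈ s, ∃ j ∈ s, i ≠ j ∧ |f i - f j| < δ := by
  have floor_mem : ∀ i ∈ s, ⌊(f i - a) / δ⌋ ∈ (Finset.Ico (0 : ℤ) n : Set ℤ) := by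
    intro i hi
    obtain ⟨hle, hlt⟩ := hf i hi
    rw [Finset.mem_coe, Finset.mem_Ico, Int.floor_nonneg, Int.floor_lt, div_lt_iff₀ hδ,
      Int.cast_natCast]
    exact ⟨div_nonneg (sub_nonneg.2 hle) hδ.le, sub_lt_iff_lt_add'.2 hlt⟩
  obtain ⟨i, hi, j, hj, hij, hfloor⟩ :=
    exists_ne_map_eq_of_encard_lt_of_maps_to
      (by rwa [encard_coe_eq_coe_finsetCard, Int.card_Ico, sub_zero, Int.toNat_natCast])
      floor_mem
  refine ⟨i, hi, j, hj, hij, ?_⟩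
  have hlt := Int.abs_sub_lt_one_of_floor_eq_floor hfloor
  rwa [← sub_div, sub_sub_sub_cancel_right, abs_div, abs_of_pos hδ, div_lt_one hδ] at hlt

theorem abs_toReal_coe_angle_le (θ : ℝ) : |(θ : Real.Angle).toReal| ≤ |θ| := by
  by_cases hθ : θ ∈ Ioc (-π) π
  · rw [Real.Angle.toReal_coe_eq_self_iff_mem_Ioc.2 hθ]
  · refine (Real.Angle.abs_toReal_le_pi _).trans (le_abs'.2 ?_)
    rw [mem_Ioc, not_and_or, not_lt, not_le] at hθ
    exact hθ.imp_right le_of_lt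

section InnerProductSpace

variable {V : Type*} [NormedAddCommGroup V] [InnerProductSpace ℝ V]

theorem angle_le_abs_sub_toReal_oangle [Fact (finrank ℝ V = 2)] (o : Orientation ℝ V (Fin 2))
    {x u v : V} (hx : x ≠ 0) (hu : u ≠ 0) (hv : v ≠ 0) :
    angle u v ≤ |(o.oangle x v).toReal - (o.oangle x u).toReal| := by
  calc angle u v = |(o.oangle u v).toReal| := o.angle_eq_abs_oangle_toReal hu hv
    _ = |(((o.oangle x v).toReal - (o.oangle x u).toReal : ℝ) : Real.Angle).toReal| := by
        rw [Real.Angle.coe_sub, Real.Angle.coe_toReal, Real.Angle.coe_toReal,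
          o.oangle_sub_left hx hu hv]
    _ ≤ |(o.oangle x v).toReal - (o.oangle x u).toReal| := abs_toReal_coe_angle_le _

theorem exists_ne_angle_lt_of_lt_encard [Fact (finrank ℝ V = 2)] {ι : Type*} {s : Set ι} {v : ι → V}
    {n : ℕ} (hn₀ : 0 < n) (hv : ∀ i ∈ s, v i ≠ 0) (hn : n < s.encard) :
    ∃ i ∈ s, ∃ j ∈ s, i ≠ j ∧ angle (v i) (v j) < 2 * π / n := by
  obtain ⟨k, hk⟩ : s.Nonempty := encard_pos.1 (bot_le.trans_lt hn)
  have := FiniteDimensional.of_fact_finrank_eq_two (K := ℝ) (V := V)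
  let o : Orientation ℝ V (Fin 2) := (finBasisOfFinrankEq ℝ V Fact.out).orientation
  -- `toReal` takes values in `(-π, π]`; the sign turns this into `[-π, π)`.
  let θ (i : ι) : ℝ := -(o.oangle (v k) (v i)).toReal
  have θ_mem : ∀ i ∈ s, θ i ∈ Ico (-π) (-π + n * (2 * π / n)) := by
    intro i _
    rw [mul_div_cancel₀ _ (Nat.cast_ne_zero.2 hn₀.ne')]
    constructor
    · exact neg_le_neg (Real.Angle.toReal_le_pi _)
    · linarith [neg_lt_neg (Real.Angle.neg_pi_lt_toReal (o.oangle (v k) (v i)))]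
  obtain ⟨i, hi, j, hj, hij, hlt⟩ := exists_ne_abs_sub_lt_of_lt_encard (by positivity) θ_mem hn
  refine ⟨i, hi, j, hj, hij, ?_⟩
  calc angle (v i) (v j)
      ≤ |(o.oangle (v k) (v j)).toReal - (o.oangle (v k) (v i)).toReal| :=
        angle_le_abs_sub_toReal_oangle o (hv k hk) (hv i hi) (hv j hj)
    _ = |θ i - θ j| := by rw [neg_sub_neg]
    _ < 2 * π / n := hlt

theorem norm_sub_lt_max_of_angle_lt_pi_div_three {u v : V}
    (h : angle u v < π / 3) : ‖u - v‖ < max ‖u‖ ‖v‖ := by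
  wlog huv : ‖u‖ ≤ ‖v‖ generalizing u v
  · rw [norm_sub_rev, max_comm]
    exact this (angle_comm u v ▸ h) (le_of_not_ge huv)
  rw [max_eq_right huv]
  have hcos : 1 / 2 < Real.cos (angle u v) := by
    rw [← Real.cos_pi_div_three]
    exact Real.cos_lt_cos_of_nonneg_of_le_pi (angle_nonneg u v) (by linarith [Real.pi_pos]) h
  have hu : u ≠ 0 := by
    rintro rfl
    linarith [angle_zero_left v, Real.pi_pos]
  have hv : v ≠ 0 := by
    rintro rfl
    linarith [angle_zero_right u, Real.pi_pos]
  have hnorm : 0 < ‖u‖ * ‖v‖ := mul_pos (norm_pos_iff.2 hu) (norm_pos_iff.2 hv)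
  refine lt_of_pow_lt_pow_left₀ 2 (norm_nonneg v) ?_
  have law_cos :=
    norm_sub_sq_eq_norm_sq_add_norm_sq_sub_two_mul_norm_mul_norm_mul_cos_angle u v
  calc ‖u - v‖ ^ 2
      = ‖u‖ ^ 2 + ‖v‖ ^ 2 - 2 * (‖u‖ * ‖v‖) * Real.cos (angle u v) := by linarith
    _ < ‖u‖ ^ 2 + ‖v‖ ^ 2 - ‖u‖ * ‖v‖ := by linarith [mul_lt_mul_of_pos_left hcos hnorm]
    _ ≤ ‖v‖ ^ 2 := by linarith [mul_le_mul_of_nonneg_left huv (norm_nonneg u), sq ‖u‖]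

theorem kissing_number_plane_general [Fact (finrank ℝ V = 2)] {P : Type*} [MetricSpace P]
    [NormedAddTorsor V P] {c : P} {S : Set P} (hc : c ∉ S)
    (hnear : S.Pairwise fun p q ↦ dist c p ≤ dist p q) : S.encard ≤ 6 := by
  by_contra! hcard
  have vsub_ne : ∀ p ∈ S, p -ᵥ c ≠ 0 := fun p hp ↦ vsub_ne_zero.2 (ne_of_mem_of_not_mem hp hc)
  obtain ⟨p, hp, q, hq, hpq, hangle⟩ :=
    exists_ne_angle_lt_of_lt_encard (n := 6) (by norm_num) vsub_ne hcard
  have hlt : dist p q < max (dist c p) (dist c q) := by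
    have h := norm_sub_lt_max_of_angle_lt_pi_div_three (hangle.trans_eq (by push_cast; ring))
    rwa [vsub_sub_vsub_cancel_right, ← dist_eq_norm_vsub, ← dist_eq_norm_vsub,
      ← dist_eq_norm_vsub, dist_comm p c, dist_comm q c] at h
  exact hlt.not_ge (max_le (hnear hp hq hpq) (dist_comm q p ▸ hnear hq hp hpq.symm))

end InnerProductSpace

/-- Planar kissing number: if every point of a finite set `S` in the Euclidean plane
is at distance exactly 2 from `c`, and any two distinct points of `S` are at distance
at least 2 from each other, then `S` has at most 6 elements. -/
theorem kissing_number_plane (c : EuclideanSpace ℝ (Fin 2))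
    (S : Finset (EuclideanSpace ℝ (Fin 2)))
    (htouch : ∀ p ∈ S, dist c p = 2)
    (hsep : ∀ p ∈ S, ∀ q ∈ S, p ≠ q → 2 ≤ dist p q) :
    S.card ≤ 6 := by
  have : Fact (finrank ℝ (EuclideanSpace ℝ (Fin 2)) = 2) := ⟨finrank_euclideanSpace_fin⟩
  rw [← Nat.cast_le (α := ℕ∞), ← encard_coe_eq_coe_finsetCard]
  exact kissing_number_plane_general (fun hc ↦ by simpa using htouch c hc)
    fun p hp q hq hpq ↦ (htouch p hp).trans_le (hsep p hp q hq hpq)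
end

section
/- Let c be a point of the Euclidean plane ℝ² and let S be a set of exactly 6 points, each at distance exactly 2 from c, with any two distinct points of S at distance at least 2 from each other. Then for every p ∈ S, the set S equals { c + R_{kπ/3}(p − c) : k = 0, 1, …, 5 }, where R_θ denotes the rotation of ℝ² about the origin by angle θ. In particular, S is the vertex set of a regular hexagon of circumradius 2 centered at c, and the configuration is uniquely determined by c together with any single point of S. -/
/-- Rotation of the Euclidean plane about the origin by angle `θ`. -/
noncomputable def planeRot (θ : ℝ) (x : EuclideanSpace ℝ (Fin 2)) :
    EuclideanSpace ℝ (Fin 2) :=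
  (WithLp.equiv 2 (Fin 2 → ℝ)).symm
    ![Real.cos θ * x 0 - Real.sin θ * x 1, Real.sin θ * x 0 + Real.cos θ * x 1]

/-!
Measure the angle of each point from `p` in `[0, 2π)`. A chord of length at least `2 r sin (π / n)`
subtends an angle between `2π / n` and `2π - 2π / n`, so the `n` angles are `2π / n`-separated and,
by comparison with `p` itself, lie in `[0, (n - 1) 2π / n]`. After division by `2π / n`, both the
floor and the ceiling map the angles injectively to `{0, …, n - 1}`; hence they have the same sum,
so they agree everywhere and every angle is an integer multiple of `2π / n`.
-/

open Set Real Complex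

section SeparatedSets

theorem eqOn_of_injOn_of_le {ι M : Type*} [AddCommMonoid M] [PartialOrder M]
    [IsOrderedCancelAddMonoid M] {s : Finset ι} {t : Finset M} {f g : ι → M}
    (hf : InjOn f s) (hg : InjOn g s) (hft : MapsTo f s t) (hgt : MapsTo g s t)
    (hcard : t.card ≤ s.card) (hfg : ∀ i ∈ s, f i ≤ g i) : EqOn f g s := by
  classical
  have sum_eq {h : ι → M} (hinj : InjOn h s) (hmaps : MapsTo h s t) :
      ∑ i ∈ s, h i = ∑ k ∈ t, k := by
    have himage : s.image h = t :=
      Finset.eq_of_subset_of_card_le (Finset.image_subset_iff.2 hmaps)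
        (by rwa [Finset.card_image_of_injOn hinj])
    rw [← himage, Finset.sum_image hinj]
  exact (Finset.sum_eq_sum_iff_of_le hfg).1 ((sum_eq hf hft).trans (sum_eq hg hgt).symm)

variable {K : Type*} [Field K] [LinearOrder K] [IsStrictOrderedRing K] [FloorRing K] {δ : K}

theorem injOn_floor_div_of_pairwise_le_abs_sub {s : Set K} (hδ : 0 < δ)
    (hsep : s.Pairwise fun x y ↦ δ ≤ |x - y|) : InjOn (fun x ↦ ⌊x / δ⌋) s := by
  intro x hx y hy hxy
  by_contra hne
  have hlt := Int.abs_sub_lt_one_of_floor_eq_floor hxy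
  rw [← sub_div, abs_div, abs_of_pos hδ, div_lt_one hδ] at hlt
  exact (hsep hx hy hne).not_gt hlt

theorem injOn_ceil_div_of_pairwise_le_abs_sub {s : Set K} (hδ : 0 < δ)
    (hsep : s.Pairwise fun x y ↦ δ ≤ |x - y|) : InjOn (fun x ↦ ⌈x / δ⌉) s := by
  intro x hx y hy (hxy : ⌈x / δ⌉ = ⌈y / δ⌉)
  by_contra hne
  have hlt := Int.abs_sub_lt_one_of_floor_eq_floor (a := -(x / δ)) (b := -(y / δ))
    (by rw [Int.floor_neg, Int.floor_neg, hxy])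
  rw [← neg_sub', abs_neg, ← sub_div, abs_div, abs_of_pos hδ, div_lt_one hδ] at hlt
  exact (hsep hx hy hne).not_gt hlt

theorem floor_div_mul_eq_self_of_pairwise_le_abs_sub {n : ℕ} {s : Finset K} (hδ : 0 < δ)
    (hcard : n ≤ s.card) (hs : ∀ x ∈ s, x ∈ Icc 0 ((n - 1) * δ))
    (hsep : (s : Set K).Pairwise fun x y ↦ δ ≤ |x - y|) {x : K} (hx : x ∈ s) :
    ⌊x / δ⌋ * δ = x := by
  have hdiv : ∀ y ∈ s, 0 ≤ y / δ ∧ y / δ ≤ n - 1 := fun y hy ↦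
    ⟨div_nonneg (hs y hy).1 hδ.le, (div_le_iff₀ hδ).2 (hs y hy).2⟩
  have hfloor_mem : MapsTo (fun y ↦ ⌊y / δ⌋) s (Finset.Icc 0 (n - 1 : ℤ)) := fun y hy ↦
    Finset.mem_coe.2 <| Finset.mem_Icc.2 ⟨Int.floor_nonneg.2 (hdiv y hy).1,
      Int.floor_le_iff.2 <| (hdiv y hy).2.trans_lt (by simp)⟩
  have hceil_mem : MapsTo (fun y ↦ ⌈y / δ⌉) s (Finset.Icc 0 (n - 1 : ℤ)) := fun y hy ↦
    Finset.mem_coe.2 <| Finset.mem_Icc.2 ⟨Int.ceil_nonneg (hdiv y hy).1,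
      Int.ceil_le.2 <| by simpa using (hdiv y hy).2⟩
  have hfloor_eq_ceil : ⌊x / δ⌋ = ⌈x / δ⌉ :=
    eqOn_of_injOn_of_le (injOn_floor_div_of_pairwise_le_abs_sub hδ hsep)
      (injOn_ceil_div_of_pairwise_le_abs_sub hδ hsep) hfloor_mem hceil_mem (by simpa using hcard)
      (fun y _ ↦ Int.floor_le_ceil (y / δ)) hx
  rw [← eq_div_iff hδ.ne']
  exact (Int.floor_le _).antisymm (hfloor_eq_ceil ▸ Int.le_ceil _)

theorem eq_range_natCast_mul_of_pairwise_le_abs_sub {n : ℕ} {s : Finset K} (hδ : 0 < δ)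
    (hcard : n ≤ s.card) (hs : ∀ x ∈ s, x ∈ Icc 0 ((n - 1) * δ))
    (hsep : (s : Set K).Pairwise fun x y ↦ δ ≤ |x - y|) :
    (s : Set K) = range fun k : Fin n ↦ (k : K) * δ := by
  have hsub : (s : Set K) ⊆ range fun k : Fin n ↦ (k : K) * δ := fun x hx ↦ by
    have hfloor := floor_div_mul_eq_self_of_pairwise_le_abs_sub hδ hcard hs hsep hx
    obtain ⟨k, hk⟩ := Int.eq_ofNat_of_zero_le (Int.floor_nonneg.2 (div_nonneg (hs x hx).1 hδ.le))
    rw [hk, Int.cast_natCast] at hfloor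
    have hk_le : (k : K) ≤ n - 1 := le_of_mul_le_mul_right (hfloor ▸ (hs x hx).2) hδ
    exact ⟨⟨k, by exact_mod_cast hk_le.trans_lt (sub_one_lt (n : K))⟩, hfloor⟩
  refine eq_of_subset_of_ncard_le hsub ?_ (finite_range _)
  calc (range fun k : Fin n ↦ (k : K) * δ).ncard ≤ (univ : Set (Fin n)).ncard := by
        rw [← image_univ]
        exact ncard_image_le finite_univ
    _ ≤ (s : Set K).ncard := by rwa [ncard_univ, Nat.card_fin, ncard_coe_finset]

end SeparatedSets

theorem mem_Icc_of_sin_le_sin {a x : ℝ} (ha : a ≤ π / 2) (hx : x ∈ Icc 0 π)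
    (h : Real.sin a ≤ Real.sin x) : x ∈ Icc a (π - a) := by
  constructor
  · by_contra! hlt
    exact h.not_gt (Real.sin_lt_sin_of_lt_of_le_pi_div_two (by linarith [hx.1, pi_pos]) ha hlt)
  · by_contra! hlt
    rw [← Real.sin_pi_sub x] at h
    exact h.not_gt (Real.sin_lt_sin_of_lt_of_le_pi_div_two (by linarith [hx.2, pi_pos]) ha
      (by linarith))

section Rotation

theorem planeRot_zero (v : EuclideanSpace ℝ (Fin 2)) : planeRot 0 v = v := by
  ext i
  fin_cases i <;> simp [planeRot]

theorem periodic_planeRot (v : EuclideanSpace ℝ (Fin 2)) :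
    Function.Periodic (planeRot · v) (2 * π) := fun θ ↦ by
  simp only [planeRot, Real.cos_add_two_pi, Real.sin_add_two_pi]

theorem planeRot_repr_orthonormalBasisOneI (θ : ℝ) (z : ℂ) :
    planeRot θ (orthonormalBasisOneI.repr z) = orthonormalBasisOneI.repr (exp (θ * I) * z) := by
  ext i
  fin_cases i <;> simp [planeRot, exp_ofReal_mul_I_re, exp_ofReal_mul_I_im, add_comm]

theorem dist_planeRot_planeRot (s t : ℝ) (v : EuclideanSpace ℝ (Fin 2)) :
    dist (planeRot s v) (planeRot t v) = 2 * ‖v‖ * |Real.sin ((t - s) / 2)| := by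
  obtain ⟨z, rfl⟩ := orthonormalBasisOneI.repr.surjective v
  have hexp : exp (t * I) = exp (s * I) * exp (I * (t - s : ℝ)) := by
    rw [← Complex.exp_add]
    congr 1
    push_cast
    ring
  calc dist (planeRot s (orthonormalBasisOneI.repr z)) (planeRot t (orthonormalBasisOneI.repr z))
      = ‖exp (t * I) * z - exp (s * I) * z‖ := by
        rw [planeRot_repr_orthonormalBasisOneI, planeRot_repr_orthonormalBasisOneI,
          LinearIsometryEquiv.dist_map, dist_comm, dist_eq_norm]
    _ = ‖exp (s * I) * (exp (I * (t - s : ℝ)) - 1) * z‖ := by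
        rw [hexp]
        ring_nf
    _ = 2 * ‖z‖ * |Real.sin ((t - s) / 2)| := by
        rw [norm_mul, norm_mul, norm_exp_ofReal_mul_I, norm_exp_I_mul_ofReal_sub_one, norm_mul,
          Real.norm_two, Real.norm_eq_abs]
        ring
    _ = 2 * ‖orthonormalBasisOneI.repr z‖ * |Real.sin ((t - s) / 2)| := by
        rw [LinearIsometryEquiv.norm_map]

theorem norm_planeRot (θ : ℝ) (v : EuclideanSpace ℝ (Fin 2)) : ‖planeRot θ v‖ = ‖v‖ := by
  obtain ⟨z, rfl⟩ := orthonormalBasisOneI.repr.surjective v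
  rw [planeRot_repr_orthonormalBasisOneI, LinearIsometryEquiv.norm_map,
    LinearIsometryEquiv.norm_map, norm_mul, norm_exp_ofReal_mul_I, one_mul]

variable {v : EuclideanSpace ℝ (Fin 2)}

theorem injOn_planeRot (hv : v ≠ 0) : InjOn (planeRot · v) (Ico 0 (2 * π)) := by
  intro s hs t ht (hst : planeRot s v = planeRot t v)
  have hsin : Real.sin ((t - s) / 2) = 0 := by
    simpa [hst, hv] using dist_planeRot_planeRot s t v
  have hzero := (Real.sin_eq_zero_iff_of_lt_of_lt (by linarith [hs.2, ht.1])
    (by linarith [hs.1, ht.2])).1 hsin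
  linarith

theorem exists_planeRot_eq {w : EuclideanSpace ℝ (Fin 2)} (h : ‖v‖ = ‖w‖) :
    ∃ θ, planeRot θ v = w := by
  obtain ⟨z, rfl⟩ := orthonormalBasisOneI.repr.surjective v
  obtain ⟨ζ, rfl⟩ := orthonormalBasisOneI.repr.surjective w
  rw [LinearIsometryEquiv.norm_map, LinearIsometryEquiv.norm_map] at h
  refine ⟨ζ.arg - z.arg, ?_⟩
  rw [planeRot_repr_orthonormalBasisOneI]
  congr 1
  calc exp ((ζ.arg - z.arg : ℝ) * I) * z
      = exp ((ζ.arg - z.arg : ℝ) * I) * (‖z‖ * exp (z.arg * I)) := by rw [norm_mul_exp_arg_mul_I]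
    _ = ‖ζ‖ * exp (ζ.arg * I) := by
        rw [h, mul_left_comm, ← Complex.exp_add]
        congr 2
        push_cast
        ring
    _ = ζ := norm_mul_exp_arg_mul_I ζ

theorem bijOn_planeRot (hv : v ≠ 0) :
    BijOn (planeRot · v) (Ico 0 (2 * π)) (Metric.sphere 0 ‖v‖) := by
  refine ⟨fun θ _ ↦ mem_sphere_zero_iff_norm.2 (norm_planeRot θ v), injOn_planeRot hv,
    fun w hw ↦ ?_⟩
  obtain ⟨θ, hθ⟩ := exists_planeRot_eq (mem_sphere_zero_iff_norm.1 hw).symm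
  obtain ⟨θ', hθ'_mem, hθ'⟩ := (periodic_planeRot v).exists_mem_Ico₀ two_pi_pos θ
  exact ⟨θ', hθ'_mem, hθ'.symm.trans hθ⟩

theorem sub_mem_Icc_of_le_dist_planeRot {a s t : ℝ} (hv : v ≠ 0) (ha : a ≤ π / 2)
    (hts : t - s ∈ Icc 0 (2 * π))
    (hdist : 2 * ‖v‖ * Real.sin a ≤ dist (planeRot s v) (planeRot t v)) :
    t - s ∈ Icc (2 * a) (2 * π - 2 * a) := by
  have hhalf : (t - s) / 2 ∈ Icc 0 π := ⟨by linarith [hts.1], by linarith [hts.2]⟩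
  rw [dist_planeRot_planeRot, abs_of_nonneg (Real.sin_nonneg_of_mem_Icc hhalf),
    mul_le_mul_iff_of_pos_left (by positivity)] at hdist
  obtain ⟨hlower, hupper⟩ := mem_Icc_of_sin_le_sin ha hhalf hdist
  constructor <;> linarith

theorem eq_range_of_pairwise_le_dist_planeRot {n : ℕ} {A : Set ℝ} (hn : 2 ≤ n) (hv : v ≠ 0)
    (hcard : A.ncard = n) (hA : A ⊆ Ico 0 (2 * π)) (hzero : 0 ∈ A)
    (hsep : A.Pairwise fun s t ↦
      2 * ‖v‖ * Real.sin (π / n) ≤ dist (planeRot s v) (planeRot t v)) :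
    A = range fun k : Fin n ↦ k * (2 * π / n) := by
  have : (0 : ℝ) < n := by positivity
  have hhalf : π / n ≤ π / 2 := by gcongr; exact_mod_cast hn
  have hgap {s t : ℝ} (hs : s ∈ A) (ht : t ∈ A) (hst : s < t) :
      t - s ∈ Icc (2 * π / n) ((n - 1) * (2 * π / n)) := by
    convert sub_mem_Icc_of_le_dist_planeRot hv hhalf
      ⟨by linarith, by linarith [(hA hs).1, (hA ht).2]⟩ (hsep hs ht hst.ne) using 2 <;> field_simp
  have hfin : A.Finite := finite_of_ncard_pos (by lia)
  lift A to Finset ℝ using hfin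
  refine eq_range_natCast_mul_of_pairwise_le_abs_sub (by positivity)
    (by rw [← hcard, ncard_coe_finset]) (fun t ht ↦ ⟨(hA ht).1, ?_⟩) fun s hs t ht hst ↦ ?_
  · rcases (hA ht).1.eq_or_lt with rfl | hpos
    · have htwo : (2 : ℝ) ≤ n := by exact_mod_cast hn
      exact mul_nonneg (by linarith [htwo]) (by positivity)
    · simpa using (hgap hzero ht hpos).2
  · rcases hst.lt_or_gt with hlt | hgt
    · rw [abs_sub_comm]
      exact (hgap hs ht hlt).1.trans (le_abs_self _)
    · exact (hgap ht hs hgt).1.trans (le_abs_self _)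

theorem eq_range_planeRot_of_pairwise_le_dist {n : ℕ} {T : Set (EuclideanSpace ℝ (Fin 2))}
    (hn : 2 ≤ n) (hv : v ≠ 0) (hvT : v ∈ T) (hcard : T.ncard = n)
    (hT : T ⊆ Metric.sphere 0 ‖v‖)
    (hsep : T.Pairwise fun x y ↦ 2 * ‖v‖ * Real.sin (π / n) ≤ dist x y) :
    T = range fun k : Fin n ↦ planeRot (k * (2 * π / n)) v := by
  set A : Set ℝ := Ico 0 (2 * π) ∩ (planeRot · v) ⁻¹' T
  have hbij : BijOn (planeRot · v) A T := (bijOn_planeRot hv).subset_right hT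
  have hA : A = range fun k : Fin n ↦ k * (2 * π / n) :=
    eq_range_of_pairwise_le_dist_planeRot hn hv (hbij.ncard_eq.trans hcard) inter_subset_left
      ⟨left_mem_Ico.2 two_pi_pos, by rwa [mem_preimage, planeRot_zero]⟩
      fun s hs t ht hst ↦ hsep hs.2 ht.2 (hbij.injOn.ne hs ht hst)
  rw [← hbij.image_eq, hA, ← range_comp]
  rfl

end Rotation

theorem six_kissing_disks_regular_hexagon_general {n : ℕ} {r : ℝ} (hn : 2 ≤ n) (hr : 0 < r)
    (c : EuclideanSpace ℝ (Fin 2)) (S : Set (EuclideanSpace ℝ (Fin 2))) (hcard : S.ncard = n)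
    (hdist : ∀ p ∈ S, dist c p = r)
    (hsep : ∀ p ∈ S, ∀ q ∈ S, p ≠ q → 2 * r * Real.sin (π / n) ≤ dist p q) :
    ∀ p ∈ S, S = {q | ∃ k : Fin n, q = c + planeRot (k * (2 * π / n)) (p - c)} := by
  intro p hp
  have hnorm {q : EuclideanSpace ℝ (Fin 2)} (hq : q ∈ S) : ‖q - c‖ = r := by
    rw [← dist_eq_norm, dist_comm, hdist q hq]
  have hcentered : (c + ·) ⁻¹' S = range fun k : Fin n ↦ planeRot (k * (2 * π / n)) (p - c) := by
    refine eq_range_planeRot_of_pairwise_le_dist hn (norm_pos_iff.1 (by rwa [hnorm hp]))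
      (by simpa using hp) ?_ (fun x hx ↦ ?_) fun x hx y hy hxy ↦ ?_
    · exact (ncard_preimage_of_injective_subset_range (add_right_injective c)
        fun q _ ↦ ⟨q - c, add_sub_cancel c q⟩).trans hcard
    · rw [mem_sphere_zero_iff_norm, hnorm hp, ← hnorm hx, add_sub_cancel_left]
    · simpa [hnorm hp] using hsep _ hx _ hy ((add_right_injective c).ne hxy)
  ext q
  calc q ∈ S ↔ q - c ∈ (c + ·) ⁻¹' S := by simp
    _ ↔ ∃ k : Fin n, q = c + planeRot (k * (2 * π / n)) (p - c) := by
        rw [hcentered]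
        simp only [mem_range, eq_sub_iff_add_eq', eq_comm]

/-- Rigidity of six disks around one: if `S` is a set of exactly 6 points of the
Euclidean plane, each at distance exactly 2 from `c`, with any two distinct points
of `S` at distance at least 2, then for every `p ∈ S` the set `S` consists exactly
of the points `c + R_{kπ/3}(p - c)` for `k = 0, …, 5`; i.e., `S` is the vertex set
of a regular hexagon of circumradius 2 centered at `c`. -/
theorem six_kissing_disks_regular_hexagon (c : EuclideanSpace ℝ (Fin 2))
    (S : Set (EuclideanSpace ℝ (Fin 2))) (hcard : S.ncard = 6)
    (htouch : ∀ p ∈ S, dist c p = 2)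
    (hsep : ∀ p ∈ S, ∀ q ∈ S, p ≠ q → 2 ≤ dist p q) :
    ∀ p ∈ S, S = {q | ∃ k : Fin 6, q = c + planeRot (k * Real.pi / 3) (p - c)} := by
  have hside : 2 * 2 * Real.sin (π / (6 : ℕ)) = 2 := by norm_num
  have hstep : 2 * π / (6 : ℕ) = π / 3 := by ring
  simpa only [hstep, mul_div_assoc] using six_kissing_disks_regular_hexagon_general (by norm_num)
    two_pos c S hcard htouch (by rwa [hside])
end

section
/- Let c be a point of the Euclidean plane ℝ² and let S be a set of exactly 6 points, each at distance exactly 2 from c, with any two distinct points of S at distance at least 2 from each other. Then for every p ∈ S there exist exactly two points q ∈ S with q ≠ p and dist p q = 2. In particular, among six pairwise internally disjoint unit disks all touching a common unit disk, every one of the six touches two of the others; hence in a (strong) unit disk contact representation of a tree, where disks of non-adjacent nodes may not touch, every node has degree at most 5. -/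
/-!
On a circle of radius `R`, chords of length at least `2 * R * sin (π / n)` are those subtending an
angle of at least `2 * π / n` at the centre; for `n = 6` and `R = 2` this length is `2`. Now let `n`
points on a circle of circumference `T` have pairwise distances at least `T / n`. If `x` is one of
them, then the arc `[x - T / n, x)` contains another one (`x` itself when `n = 1`, where this arc is
the whole circle): otherwise the other `n - 1` arcs of length `T / n` would hold all `n` points. By
separation that point is `x - T / n`. So `x` has a neighbour at angle exactly `T / n` on either
side, and in the plane no third direction makes this angle with that of `x`.
-/

open Module Real
open scoped EuclideanGeometry

section Packing

variable {ι 𝕜 : Type*} [Field 𝕜] [LinearOrder 𝕜] [IsStrictOrderedRing 𝕜] [FloorRing 𝕜]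
  {s : Finset ι} {f : ι → 𝕜} {a : 𝕜}

theorem card_le_of_pairwise_le_abs_sub {δ : 𝕜} {n : ℕ} (hδ : 0 < δ)
    (hf : ∀ i ∈ s, f i ∈ Set.Ico a (a + n * δ))
    (hsep : (s : Set ι).Pairwise fun i j => δ ≤ |f i - f j|) : s.card ≤ n := by
  have hmaps : Set.MapsTo (fun i => ⌊(f i - a) / δ⌋) s (Finset.Ico (0 : ℤ) n) := by
    intro i hi
    obtain ⟨ha, hn⟩ := hf i hi
    rw [Finset.coe_Ico, Set.mem_Ico, Int.floor_nonneg, Int.floor_lt, div_lt_iff₀ hδ]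
    exact ⟨div_nonneg (sub_nonneg.2 ha) hδ.le, by push_cast; linarith⟩
  have hinj : Set.InjOn (fun i => ⌊(f i - a) / δ⌋) s := by
    intro i hi j hj hij
    by_contra hne
    have hlt := Int.abs_sub_lt_one_of_floor_eq_floor hij
    rw [← sub_div, sub_sub_sub_cancel_right, abs_div, abs_of_pos hδ, div_lt_one hδ] at hlt
    exact (hsep hi hj hne).not_gt hlt
  simpa using Finset.card_le_card_of_injOn _ hmaps hinj

theorem exists_sub_div_card_le_of_pairwise_le_abs_sub {T : 𝕜} (hT : 0 < T) (hs : s.Nonempty)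
    (hf : ∀ i ∈ s, f i ∈ Set.Ico a (a + T))
    (hsep : (s : Set ι).Pairwise fun i j => T / s.card ≤ |f i - f j|) :
    ∃ i ∈ s, a + T - T / s.card ≤ f i := by
  have hcard : 1 ≤ s.card := hs.card_pos
  have harcs : ((s.card - 1 : ℕ) : 𝕜) * (T / s.card) = T - T / s.card := by
    push_cast [hcard]
    field_simp
  by_contra! hall
  have hle : s.card ≤ s.card - 1 :=
    card_le_of_pairwise_le_abs_sub (by positivity) (fun i hi => ⟨(hf i hi).1, by
      rw [harcs, ← add_sub_assoc]
      exact hall i hi⟩) hsep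
  omega

end Packing

section Circle

variable {T : ℝ}

theorem addCircle_dist_coe_le (a b : ℝ) : dist (a : AddCircle T) b ≤ |a - b| := by
  rw [dist_eq_norm, ← AddCircle.coe_sub]
  exact QuotientAddGroup.norm_mk_le_norm

variable [hT : Fact (0 < T)] {ι : Type*} {s : Finset ι} {f : ι → AddCircle T} {i : ι}

theorem exists_eq_sub_of_pairwise_le_dist
    (hf : (s : Set ι).Pairwise fun i j => T / s.card ≤ dist (f i) (f j)) (hi : i ∈ s) :
    ∃ j ∈ s, f j = f i - ↑(T / s.card) := by
  set δ := T / s.card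
  have hδT : δ ≤ T := div_le_self hT.out.le (by exact_mod_cast Finset.card_pos.2 ⟨i, hi⟩)
  let t : ι → ℝ := fun j => AddCircle.equivIco T 0 (f j - f i)
  have coe_t (j) : (t j : AddCircle T) = f j - f i := AddCircle.coe_equivIco
  have t_mem (j) : t j ∈ Set.Ico 0 (0 + T) := (AddCircle.equivIco T 0 (f j - f i)).2
  have t_sep : (s : Set ι).Pairwise fun j k => δ ≤ |t j - t k| := by
    intro j hj k hk hne
    have hle := addCircle_dist_coe_le (T := T) (t j) (t k)
    rw [coe_t, coe_t, dist_sub_right] at hle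
    exact (hf hj hk hne).trans hle
  obtain ⟨j, hj, hlast⟩ : ∃ j ∈ s, 0 + T - δ ≤ t j :=
    exists_sub_div_card_le_of_pairwise_le_abs_sub hT.out ⟨i, hi⟩ (fun j _ => t_mem j) t_sep
  rw [zero_add] at hlast
  have hle : t j ≤ T - δ := by
    rcases eq_or_ne j i with rfl | hne
    · have hzero : t j = 0 := by
        simpa [t] using AddCircle.equivIco_coe_of_mem (p := T) (a := 0) (y := 0) (by simp [hT.out])
      linarith
    · have hdist : dist (t j : AddCircle T) (T : ℝ) = dist (f j) (f i) := by
        rw [coe_t, AddCircle.coe_period, ← sub_self (f i), dist_sub_right]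
      have hgap := (hf hj hi hne).trans (hdist ▸ addCircle_dist_coe_le (t j) T)
      rw [abs_sub_comm, abs_of_pos (by linarith [(t_mem j).2])] at hgap
      linarith
  refine ⟨j, hj, ?_⟩
  rw [← sub_add_cancel (f j) (f i), ← coe_t, le_antisymm hle hlast, AddCircle.coe_sub,
    AddCircle.coe_period, zero_sub, neg_add_eq_sub]

theorem exists_eq_add_of_pairwise_le_dist
    (hf : (s : Set ι).Pairwise fun i j => T / s.card ≤ dist (f i) (f j)) (hi : i ∈ s) :
    ∃ j ∈ s, f j = f i + ↑(T / s.card) := by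
  obtain ⟨j, hj, hji⟩ := exists_eq_sub_of_pairwise_le_dist (f := fun i => -f i)
    (by simpa only [dist_neg_neg] using hf) hi
  exact ⟨j, hj, by rw [← neg_inj, hji, neg_add']⟩

end Circle

section Angle

theorem two_pi_div_lt_pi {n : ℕ} (hn : 3 ≤ n) : 2 * π / n < π := by
  rw [div_lt_iff₀ (by positivity), mul_comm]
  gcongr
  exact_mod_cast hn

theorem norm_angle_eq_abs_toReal (θ : Real.Angle) : ‖θ‖ = |θ.toReal| := by
  conv_lhs => rw [← θ.coe_toReal]
  refine (AddCircle.norm_coe_eq_abs_iff (2 * π) two_pi_pos.ne').2 ?_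
  rw [abs_of_pos two_pi_pos, mul_div_cancel_left₀ π two_ne_zero]
  exact θ.abs_toReal_le_pi

variable {V P : Type*} [NormedAddCommGroup V] [InnerProductSpace ℝ V] [MetricSpace P]
  [NormedAddTorsor V P] {c p q : P} {R θ : ℝ}

theorem dist_eq_two_mul_mul_sin_angle_div_two (hp : dist c p = R) (hq : dist c q = R) :
    dist p q = 2 * R * sin (∠ p c q / 2) := by
  have hR : 0 ≤ R := hp ▸ dist_nonneg
  have hsin : 0 ≤ sin (∠ p c q / 2) := sin_nonneg_of_nonneg_of_le_pi
    (by linarith [EuclideanGeometry.angle_nonneg p c q])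
    (by linarith [EuclideanGeometry.angle_le_pi p c q, pi_pos])
  have hcos : sin (∠ p c q / 2) ^ 2 = (1 - cos (∠ p c q)) / 2 := by
    rw [sin_sq_eq_half_sub, mul_div_cancel₀ _ two_ne_zero]; ring
  have hlaw := EuclideanGeometry.law_cos p c q
  rw [dist_comm p c, dist_comm q c, hp, hq] at hlaw
  rw [← sq_eq_sq₀ dist_nonneg (by positivity)]
  linear_combination hlaw - 4 * R ^ 2 * hcos

theorem two_mul_mul_sin_div_two_le_dist_iff (hR : 0 < R) (hp : dist c p = R) (hq : dist c q = R)
    (hθ : θ ∈ Set.Icc 0 π) : 2 * R * sin (θ / 2) ≤ dist p q ↔ θ ≤ ∠ p c q := by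
  have hangle := EuclideanGeometry.angle_nonneg p c q
  have hangle' := EuclideanGeometry.angle_le_pi p c q
  obtain ⟨hθ, hθ'⟩ := hθ
  rw [dist_eq_two_mul_mul_sin_angle_div_two hp hq, mul_le_mul_iff_right₀ (by positivity),
    strictMonoOn_sin.le_iff_le ⟨by linarith, by linarith⟩ ⟨by linarith, by linarith⟩,
    div_le_div_iff_of_pos_right two_pos]

theorem dist_eq_two_mul_mul_sin_div_two_iff (hR : 0 < R) (hp : dist c p = R) (hq : dist c q = R)
    (hθ : θ ∈ Set.Icc 0 π) : dist p q = 2 * R * sin (θ / 2) ↔ ∠ p c q = θ := by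
  have hangle := EuclideanGeometry.angle_nonneg p c q
  have hangle' := EuclideanGeometry.angle_le_pi p c q
  obtain ⟨hθ, hθ'⟩ := hθ
  rw [dist_eq_two_mul_mul_sin_angle_div_two hp hq, mul_right_inj' (by positivity),
    strictMonoOn_sin.injOn.eq_iff ⟨by linarith, by linarith⟩ ⟨by linarith, by linarith⟩,
    div_left_inj' two_ne_zero]

variable [Fact (finrank ℝ V = 2)] {S : Finset P}

section Oriented

variable [Module.Oriented ℝ V (Fin 2)]

theorem dist_oangle_oangle {r : P} (hp : p ≠ c) (hq : q ≠ c) (hr : r ≠ c) :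
    dist (∡ p c q) (∡ p c r) = ∠ q c r := by
  rw [dist_comm, dist_eq_norm, EuclideanGeometry.oangle_sub_left hp hq hr, norm_angle_eq_abs_toReal,
    EuclideanGeometry.angle_eq_abs_oangle_toReal hq hr]

theorem angle_eq_iff_oangle_eq_or_eq_neg (hp : p ≠ c) (hq : q ≠ c) (hθ : θ ∈ Set.Icc 0 π) :
    ∠ p c q = θ ↔ ∡ p c q = θ ∨ ∡ p c q = -θ := by
  constructor
  · rintro rfl
    exact EuclideanGeometry.oangle_eq_angle_or_eq_neg_angle hp hq
  · rw [EuclideanGeometry.angle_eq_abs_oangle_toReal hp hq]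
    rintro (h | h)
    · rw [h, Real.Angle.abs_toReal_coe_eq_self_iff.2 hθ]
    · rw [h, Real.Angle.abs_toReal_neg_coe_eq_self_iff.2 hθ]

theorem exists_oangle_eq_of_pairwise_le_angle (hc : c ∉ S)
    (hS : (S : Set P).Pairwise fun q r => 2 * π / S.card ≤ ∠ q c r) (hp : p ∈ S) :
    (∃ q ∈ S, ∡ p c q = ↑(2 * π / S.card)) ∧ ∃ q ∈ S, ∡ p c q = -↑(2 * π / S.card) := by
  have ne_c {q : P} (hq : q ∈ S) : q ≠ c := ne_of_mem_of_not_mem hq hc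
  have : Fact (0 < 2 * π) := ⟨two_pi_pos⟩
  let f : P → AddCircle (2 * π) := fun q => ∡ p c q
  have hf : (S : Set P).Pairwise fun q r => 2 * π / S.card ≤ dist (f q) (f r) :=
    fun q hq r hr hne =>
      (hS hq hr hne).trans_eq (dist_oangle_oangle (ne_c hp) (ne_c hq) (ne_c hr)).symm
  have hzero : f p = 0 := EuclideanGeometry.oangle_self_left_right p c
  obtain ⟨a, ha, hadd⟩ := exists_eq_add_of_pairwise_le_dist hf hp
  obtain ⟨b, hb, hsub⟩ := exists_eq_sub_of_pairwise_le_dist hf hp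
  rw [hzero, zero_add] at hadd
  rw [hzero, zero_sub] at hsub
  exact ⟨⟨a, ha, hadd⟩, b, hb, hsub⟩

end Oriented

theorem ncard_angle_eq_two_pi_div_card (hc : c ∉ S) (hcard : 3 ≤ S.card)
    (hS : (S : Set P).Pairwise fun q r => 2 * π / S.card ≤ ∠ q c r) (hp : p ∈ S) :
    {q ∈ (S : Set P) | ∠ p c q = 2 * π / S.card}.ncard = 2 := by
  have : FiniteDimensional ℝ V := .of_fact_finrank_eq_two
  let _ : Module.Oriented ℝ V (Fin 2) := ⟨(finBasisOfFinrankEq ℝ V Fact.out).orientation⟩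
  have ne_c {q : P} (hq : q ∈ S) : q ≠ c := ne_of_mem_of_not_mem hq hc
  have hδ : 0 < 2 * π / S.card := by positivity
  have hδπ := two_pi_div_lt_pi hcard
  have hinj : Set.InjOn (fun q => ∡ p c q) S := fun q hq r hr hqr => by
    by_contra hne
    refine hδ.not_ge ((hS hq hr hne).trans_eq ?_)
    rw [← dist_oangle_oangle (ne_c hp) (ne_c hq) (ne_c hr), dist_eq_zero.2 hqr]
  obtain ⟨⟨a, ha, hpa⟩, b, hb, hpb⟩ := exists_oangle_eq_of_pairwise_le_angle hc hS hp
  have hab : a ≠ b := by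
    rintro rfl
    have hsin := congrArg Real.Angle.sin (hpa.symm.trans hpb)
    rw [Real.Angle.sin_neg, Real.Angle.sin_coe] at hsin
    linarith [sin_pos_of_pos_of_lt_pi hδ hδπ]
  refine Set.ncard_eq_two.2 ⟨a, b, hab, Set.ext fun q => ?_⟩
  have hiff {q : P} (hq : q ∈ S) := angle_eq_iff_oangle_eq_or_eq_neg (ne_c hp) (ne_c hq)
    ⟨hδ.le, hδπ.le⟩
  constructor
  · rintro ⟨hq, hpq⟩
    rcases (hiff hq).1 hpq with h | h
    · exact Or.inl (hinj hq ha (h.trans hpa.symm))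
    · exact Or.inr (hinj hq hb (h.trans hpb.symm))
  · rintro (rfl | rfl)
    · exact ⟨ha, (hiff ha).2 (Or.inl hpa)⟩
    · exact ⟨hb, (hiff hb).2 (Or.inr hpb)⟩

end Angle

theorem six_kissing_disks_each_touches_two_general {V P : Type*} [NormedAddCommGroup V]
    [InnerProductSpace ℝ V] [MetricSpace P] [NormedAddTorsor V P] [Fact (finrank ℝ V = 2)]
    (c : P) {R : ℝ} {n : ℕ} (hn : 3 ≤ n) (S : Set P) (hcard : S.ncard = n)
    (htouch : ∀ p ∈ S, dist c p = R)
    (hsep : ∀ p ∈ S, ∀ q ∈ S, p ≠ q → 2 * R * sin (π / n) ≤ dist p q) :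
    ∀ p ∈ S, {q ∈ S | q ≠ p ∧ dist p q = 2 * R * sin (π / n)}.ncard = 2 := by
  intro p hp
  lift S to Finset P using Set.finite_of_ncard_ne_zero (by omega)
  rw [Set.ncard_coe_finset] at hcard
  subst hcard
  have hR : 0 < R := by
    obtain ⟨q, hq, hne⟩ := Finset.exists_mem_ne (by omega : 1 < S.card) p
    linarith [dist_pos.2 hne, dist_triangle_left q p c, htouch p hp, htouch q hq]
  have hc : c ∉ S := fun h => hR.ne (by rw [← htouch c h, dist_self])
  have hδ : 0 < 2 * π / S.card := by positivity
  have hδ_mem : 2 * π / S.card ∈ Set.Icc 0 π := ⟨hδ.le, (two_pi_div_lt_pi hn).le⟩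
  rw [show π / S.card = 2 * π / S.card / 2 by ring] at hsep ⊢
  have hangle : (S : Set P).Pairwise fun q r => 2 * π / S.card ≤ ∠ q c r := fun q hq r hr hne =>
    (two_mul_mul_sin_div_two_le_dist_iff hR (htouch q hq) (htouch r hr) hδ_mem).1
      (hsep q hq r hr hne)
  rw [← ncard_angle_eq_two_pi_div_card hc hn hangle hp]
  congr 1
  ext q
  refine and_congr_right fun hq => ?_
  rw [dist_eq_two_mul_mul_sin_div_two_iff hR (htouch p hp) (htouch q hq) hδ_mem,
    and_iff_right_iff_imp]
  rintro h rfl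
  have hqc : q ≠ c := ne_of_mem_of_not_mem (Finset.mem_coe.1 hq) hc
  exact hδ.ne ((EuclideanGeometry.angle_self_of_ne hqc).symm.trans h)

/-- If `S` is a set of exactly 6 points of the Euclidean plane, each at distance
exactly 2 from `c`, with any two distinct points of `S` at distance at least 2,
then every point `p ∈ S` has exactly two points `q ∈ S` with `q ≠ p` and
`dist p q = 2` (each of the six outer disks touches exactly two of the others). -/
theorem six_kissing_disks_each_touches_two (c : EuclideanSpace ℝ (Fin 2))
    (S : Set (EuclideanSpace ℝ (Fin 2))) (hcard : S.ncard = 6)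
    (htouch : ∀ p ∈ S, dist c p = 2)
    (hsep : ∀ p ∈ S, ∀ q ∈ S, p ≠ q → 2 ≤ dist p q) :
    ∀ p ∈ S, {q ∈ S | q ≠ p ∧ dist p q = 2}.ncard = 2 := by
  have : Fact (finrank ℝ (EuclideanSpace ℝ (Fin 2)) = 2) := ⟨finrank_euclideanSpace_fin⟩
  have hchord : (2 : ℝ) * 2 * sin (π / (6 : ℕ)) = 2 := by norm_num
  simpa only [hchord] using six_kissing_disks_each_touches_two_general c (by norm_num) S hcard
    htouch (by simpa only [hchord] using hsep)
end

section
/- Let u = (2, 0) and v = (1, √3) in the Euclidean plane ℝ², and consider the hexagonal lattice Λ = { m • u + n • v : m, n ∈ ℤ }. Then any two distinct points of Λ are at distance at least 2; consequently, the unit disks centered at the points of Λ have pairwise disjoint interiors. -/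
/-- A point of the Euclidean plane given by its two coordinates. -/
noncomputable def pt (x y : ℝ) : EuclideanSpace ℝ (Fin 2) :=
  (WithLp.equiv 2 (Fin 2 → ℝ)).symm ![x, y]

/-!
The pair `u = (2, 0)`, `v = (1, √3)` is reduced in the sense of Lagrange and Gauss:
`2 * |⟪u, v⟫| ≤ ‖u‖ ^ 2 ≤ ‖v‖ ^ 2`. For any reduced pair, expanding the square gives
`‖m • u + n • v‖ ^ 2 ≥ (m ^ 2 - |m * n| + n ^ 2) * ‖u‖ ^ 2`, and the first factor is a positive
integer unless `m = n = 0`. So `u` is a shortest nonzero vector of the lattice.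
-/

open scoped RealInnerProductSpace

theorem sq_sub_abs_mul_add_sq_pos {R : Type*} [CommRing R] [LinearOrder R] [IsStrictOrderedRing R]
    {a b : R} (hab : a ≠ 0 ∨ b ≠ 0) : 0 < a ^ 2 - |a * b| + b ^ 2 := by
  have two_mul_eq : 2 * (a ^ 2 - |a * b| + b ^ 2) = (|a| - |b|) ^ 2 + (a ^ 2 + b ^ 2) := by
    rw [abs_mul]
    linear_combination - sq_abs a - sq_abs b
  have sum_sq_pos : 0 < a ^ 2 + b ^ 2 := by
    rcases hab with ha | hb <;> positivity
  have sq_diff_nonneg : 0 ≤ (|a| - |b|) ^ 2 := sq_nonneg _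
  linarith

section InnerProductSpace

variable {E : Type*} [SeminormedAddCommGroup E] [InnerProductSpace ℝ E] {u v : E}

theorem norm_smul_add_smul_sq (a b : ℝ) (u v : E) :
    ‖a • u + b • v‖ ^ 2 = a ^ 2 * ‖u‖ ^ 2 + 2 * (a * b) * ⟪u, v⟫ + b ^ 2 * ‖v‖ ^ 2 := by
  rw [norm_add_sq_real, norm_smul, norm_smul, real_inner_smul_left, real_inner_smul_right,
    mul_pow, mul_pow, Real.norm_eq_abs, Real.norm_eq_abs, sq_abs, sq_abs]
  ring

/-- A pair of vectors reduced in the sense of Lagrange and Gauss, the shorter one first: the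
orthogonal projection of `v` on the line of `u` is at most half as long as `u`. -/
structure IsLagrangeReduced (u v : E) : Prop where
  norm_le : ‖u‖ ≤ ‖v‖
  two_mul_abs_inner_le : 2 * |⟪u, v⟫| ≤ ‖u‖ ^ 2

namespace IsLagrangeReduced

theorem mul_norm_sq_le_norm_smul_add_smul_sq (huv : IsLagrangeReduced u v) (a b : ℝ) :
    (a ^ 2 - |a * b| + b ^ 2) * ‖u‖ ^ 2 ≤ ‖a • u + b • v‖ ^ 2 := by
  have cross_term : -(|a * b| * ‖u‖ ^ 2) ≤ 2 * (a * b) * ⟪u, v⟫ :=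
    calc -(|a * b| * ‖u‖ ^ 2) ≤ -(|a * b| * (2 * |⟪u, v⟫|)) := by
          gcongr
          exact huv.two_mul_abs_inner_le
      _ = 2 * -|a * b * ⟪u, v⟫| := by
          rw [abs_mul (a * b)]
          ring
      _ ≤ 2 * (a * b * ⟪u, v⟫) := by
          gcongr
          exact neg_abs_le _
      _ = 2 * (a * b) * ⟪u, v⟫ := by ring
  calc (a ^ 2 - |a * b| + b ^ 2) * ‖u‖ ^ 2
      = a ^ 2 * ‖u‖ ^ 2 + -(|a * b| * ‖u‖ ^ 2) + b ^ 2 * ‖u‖ ^ 2 := by ring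
    _ ≤ a ^ 2 * ‖u‖ ^ 2 + 2 * (a * b) * ⟪u, v⟫ + b ^ 2 * ‖v‖ ^ 2 := by
        gcongr
        exact huv.norm_le
    _ = ‖a • u + b • v‖ ^ 2 := (norm_smul_add_smul_sq a b u v).symm

theorem norm_le_norm_zsmul_add_zsmul (huv : IsLagrangeReduced u v) {m n : ℤ}
    (hmn : m ≠ 0 ∨ n ≠ 0) : ‖u‖ ≤ ‖m • u + n • v‖ := by
  have one_le : (1 : ℝ) ≤ (m : ℝ) ^ 2 - |(m : ℝ) * n| + (n : ℝ) ^ 2 := by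
    exact_mod_cast Int.add_one_le_iff.mpr (sq_sub_abs_mul_add_sq_pos hmn)
  rw [← Int.cast_smul_eq_zsmul ℝ m, ← Int.cast_smul_eq_zsmul ℝ n]
  refine le_of_sq_le_sq ?_ (norm_nonneg _)
  calc ‖u‖ ^ 2 ≤ ((m : ℝ) ^ 2 - |(m : ℝ) * n| + (n : ℝ) ^ 2) * ‖u‖ ^ 2 :=
        le_mul_of_one_le_left (sq_nonneg _) one_le
    _ ≤ ‖(m : ℝ) • u + (n : ℝ) • v‖ ^ 2 := huv.mul_norm_sq_le_norm_smul_add_smul_sq m n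

theorem norm_le_dist_of_zsmul_add_zsmul_ne (huv : IsLagrangeReduced u v) {m n m' n' : ℤ}
    (hne : m • u + n • v ≠ m' • u + n' • v) :
    ‖u‖ ≤ dist (m • u + n • v) (m' • u + n' • v) := by
  have coeff_ne : m - m' ≠ 0 ∨ n - n' ≠ 0 := by
    by_contra! coeff_eq
    exact hne (by rw [sub_eq_zero.mp coeff_eq.1, sub_eq_zero.mp coeff_eq.2])
  have sub_eq : m • u + n • v - (m' • u + n' • v) = (m - m') • u + (n - n') • v := by
    module
  rw [dist_eq_norm, sub_eq]
  exact huv.norm_le_norm_zsmul_add_zsmul coeff_ne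

end IsLagrangeReduced

theorem hexagonal_lattice_separated_general (huv : IsLagrangeReduced u v) :
    let Λ : Set E := {p | ∃ m n : ℤ, p = m • u + n • v}
    (∀ p ∈ Λ, ∀ q ∈ Λ, p ≠ q → ‖u‖ ≤ dist p q) ∧
      ∀ p ∈ Λ, ∀ q ∈ Λ, p ≠ q →
        Disjoint (Metric.ball p (‖u‖ / 2)) (Metric.ball q (‖u‖ / 2)) := by
  intro Λ
  have separated : ∀ p ∈ Λ, ∀ q ∈ Λ, p ≠ q → ‖u‖ ≤ dist p q := by
    rintro _ ⟨m, n, rfl⟩ _ ⟨m', n', rfl⟩ hne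
    exact huv.norm_le_dist_of_zsmul_add_zsmul_ne hne
  refine ⟨separated, fun p hp q hq hne => Metric.ball_disjoint_ball ?_⟩
  rw [add_halves]
  exact separated p hp q hq hne

end InnerProductSpace

theorem inner_pt_pt (a b c d : ℝ) : ⟪pt a b, pt c d⟫ = a * c + b * d := by
  simp [pt, PiLp.inner_apply, mul_comm]

theorem norm_pt (x y : ℝ) : ‖pt x y‖ = √(x ^ 2 + y ^ 2) := by
  rw [norm_eq_sqrt_real_inner, inner_pt_pt, sq, sq]

theorem norm_pt_two_zero : ‖pt 2 0‖ = 2 := by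
  norm_num [norm_pt]

theorem norm_pt_one_sqrt_three : ‖pt 1 √3‖ = 2 := by
  norm_num [norm_pt]

theorem isLagrangeReduced_hexagonal : IsLagrangeReduced (pt 2 0) (pt 1 √3) where
  norm_le := by rw [norm_pt_two_zero, norm_pt_one_sqrt_three]
  two_mul_abs_inner_le := by norm_num [norm_pt_two_zero, inner_pt_pt]

/-- In the hexagonal lattice generated by `u = (2,0)` and `v = (1, √3)`, any two
distinct lattice points are at distance at least 2; consequently the open unit balls
centered at the lattice points are pairwise disjoint. -/
theorem hexagonal_lattice_separated :
    let u := pt 2 0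
    let v := pt 1 (Real.sqrt 3)
    let Λ : Set (EuclideanSpace ℝ (Fin 2)) := {p | ∃ m n : ℤ, p = m • u + n • v}
    (∀ p ∈ Λ, ∀ q ∈ Λ, p ≠ q → 2 ≤ dist p q) ∧
      ∀ p ∈ Λ, ∀ q ∈ Λ, p ≠ q → Disjoint (Metric.ball p 1) (Metric.ball q 1) := by
  simpa only [norm_pt_two_zero, div_self (two_ne_zero' ℝ)] using
    hexagonal_lattice_separated_general isLagrangeReduced_hexagonal
end

section
/- Let V be a type and c : V → ℝ² an injective map such that any two distinct u, v ∈ V satisfy dist (c u) (c v) ≥ 2 (i.e., the unit disks centered at the points c v are pairwise internally disjoint). Then for every v ∈ V, the set { u ∈ V : u ≠ v ∧ dist (c u) (c v) = 2 } is finite and has at most 6 elements. In particular, every graph admitting a weak unit disk contact representation has maximum degree at most 6. -/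
/-!
Seen from the centre `c v`, the centres `c u` and `c w` of two disks touching the disk of `v` span
an angle of at least `π / 3`, since in the triangle they form with `c v` the side `[c u, c w]` is at
least as long as the other two. Cut the directions at `c v` into six half-open sectors of width
`π / 3`: each contains at most one such centre.
-/

open Module Real

open scoped EuclideanGeometry

/-- The index in `{0, …, 5}` of the sector of width `π / 3` containing a direction. The sectors are
counted clockwise from the negative real axis: the representative of `θ` lies in `(-π, π]`, so
measuring down from `π` makes all six of them half-open, without a seventh at the end. -/
noncomputable def sextant (θ : Real.Angle) : ℤ :=
  ⌊(π - θ.toReal) / (π / 3)⌋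

theorem sextant_mem_Ico (θ : Real.Angle) : sextant θ ∈ Set.Ico (0 : ℤ) 6 := by
  have hπ : 0 < π / 3 := by positivity
  constructor
  · exact Int.floor_nonneg.mpr (div_nonneg (sub_nonneg.mpr θ.toReal_le_pi) hπ.le)
  · rw [sextant, Int.floor_lt, div_lt_iff₀ hπ]
    push_cast
    linarith [θ.neg_pi_lt_toReal]

theorem abs_toReal_sub_lt_of_sextant_eq {θ ψ : Real.Angle} (h : sextant θ = sextant ψ) :
    |(θ - ψ).toReal| < π / 3 := by
  have hπ : 0 < π / 3 := by positivity
  have hlt : |θ.toReal - ψ.toReal| < π / 3 := by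
    have := Int.abs_sub_lt_one_of_floor_eq_floor h
    rwa [← sub_div, sub_sub_sub_cancel_left, abs_div, abs_of_pos hπ, div_lt_one hπ,
      abs_sub_comm] at this
  obtain ⟨hneg, hpos⟩ := abs_lt.mp hlt
  have hrep : (θ - ψ).toReal = θ.toReal - ψ.toReal := by
    conv_lhs => rw [← θ.coe_toReal, ← ψ.coe_toReal, ← Real.Angle.coe_sub]
    exact Real.Angle.toReal_coe_eq_self_iff.mpr ⟨by linarith, by linarith⟩
  rwa [hrep]

section InnerProductSpace

variable {V : Type*} [NormedAddCommGroup V] [InnerProductSpace ℝ V]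

theorem angle_lt_pi_div_three_of_sextant_oangle_eq [Fact (finrank ℝ V = 2)]
    (o : Orientation ℝ V (Fin 2)) {x y z : V} (hx : x ≠ 0) (hy : y ≠ 0) (hz : z ≠ 0)
    (h : sextant (o.oangle x y) = sextant (o.oangle x z)) :
    InnerProductGeometry.angle y z < π / 3 := by
  rw [o.angle_eq_abs_oangle_toReal hy hz, ← o.oangle_sub_left hx hy hz]
  exact abs_toReal_sub_lt_of_sextant_eq h.symm

theorem encard_le_six_of_pi_div_three_le_angle (hV : finrank ℝ V = 2) {s : Set V} (h₀ : 0 ∉ s)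
    (hs : s.Pairwise fun x y ↦ π / 3 ≤ InnerProductGeometry.angle x y) : s.encard ≤ 6 := by
  have : Fact (finrank ℝ V = 2) := ⟨hV⟩
  have : Module.Finite ℝ V := Module.finite_of_finrank_eq_succ hV
  let b := finBasisOfFinrankEq ℝ V hV
  let sector (x : V) : ℤ := sextant (b.orientation.oangle (b 0) x)
  have hmaps : s.MapsTo sector (Set.Ico 0 6) := fun x _ ↦ sextant_mem_Ico _
  have hinj : s.InjOn sector := fun x hx y hy hxy ↦ by
    by_contra hne
    exact (hs hx hy hne).not_gt <| angle_lt_pi_div_three_of_sextant_oangle_eq _ (b.ne_zero 0)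
      (ne_of_mem_of_not_mem hx h₀) (ne_of_mem_of_not_mem hy h₀) hxy
  calc s.encard ≤ (Set.Ico (0 : ℤ) 6).encard := Set.encard_le_encard_of_injOn hmaps hinj
    _ = 6 := by
      rw [← Finset.coe_Ico, Set.encard_coe_eq_coe_finsetCard, Int.card_Ico]
      rfl

variable {P : Type*} [MetricSpace P] [NormedAddTorsor V P]

theorem dist_lt_max_of_angle_lt_pi_div_three {p₁ p₂ p₃ : P} (h : ∠ p₁ p₂ p₃ < π / 3) :
    dist p₁ p₃ < max (dist p₁ p₂) (dist p₃ p₂) := by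
  have h₁ : 0 < dist p₁ p₂ := dist_pos.mpr fun hp ↦ by
    rw [hp, EuclideanGeometry.angle_self_left] at h
    linarith [pi_pos]
  have h₃ : 0 < dist p₃ p₂ := dist_pos.mpr fun hp ↦ by
    rw [hp, EuclideanGeometry.angle_self_right] at h
    linarith [pi_pos]
  have hcos : 1 / 2 < cos (∠ p₁ p₂ p₃) := by
    rw [← cos_pi_div_three]
    exact cos_lt_cos_of_nonneg_of_le_pi (EuclideanGeometry.angle_nonneg _ _ _)
      (by linarith [pi_pos]) h
  have hside : dist p₁ p₃ ^ 2 <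
      dist p₁ p₂ ^ 2 + dist p₃ p₂ ^ 2 - dist p₁ p₂ * dist p₃ p₂ := by
    have := EuclideanGeometry.law_cos p₁ p₂ p₃
    nlinarith [mul_pos h₁ h₃]
  have hmax : dist p₁ p₂ ^ 2 + dist p₃ p₂ ^ 2 - dist p₁ p₂ * dist p₃ p₂ ≤
      max (dist p₁ p₂) (dist p₃ p₂) ^ 2 := by
    rcases le_total (dist p₁ p₂) (dist p₃ p₂) with hle | hle
    · rw [max_eq_right hle]
      nlinarith
    · rw [max_eq_left hle]
      nlinarith
  exact lt_of_pow_lt_pow_left₀ 2 (h₁.le.trans (le_max_left _ _)) (hside.trans_le hmax)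

theorem encard_le_six_of_max_dist_le_dist (hV : finrank ℝ V = 2) {s : Set P} {p : P} (hp : p ∉ s)
    (hs : s.Pairwise fun q r ↦ max (dist q p) (dist r p) ≤ dist q r) : s.encard ≤ 6 := by
  rw [← (vsub_left_injective p).encard_image]
  refine encard_le_six_of_pi_div_three_le_angle hV (fun ⟨q, hq, hqp⟩ ↦ ?_) ?_
  · exact hp (vsub_eq_zero_iff_eq.mp hqp ▸ hq)
  · rintro _ ⟨q, hq, rfl⟩ _ ⟨r, hr, rfl⟩ hqr
    by_contra! hangle
    exact (hs hq hr (ne_of_apply_ne (· -ᵥ p) hqr)).not_gt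
      (dist_lt_max_of_angle_lt_pi_div_three hangle)

theorem weak_udcr_max_degree_six_general (hV : finrank ℝ V = 2) {ι : Type*} (c : ι → P) {r : ℝ}
    (hr : 0 < r) (hsep : Pairwise fun i j ↦ r ≤ dist (c i) (c j)) (i : ι) :
    {j | j ≠ i ∧ dist (c j) (c i) = r}.encard ≤ 6 := by
  have hinj : c.Injective := fun j k hjk ↦ by
    by_contra hne
    exact dist_pos.mp (hr.trans_le (hsep hne)) hjk
  rw [← hinj.encard_image]
  refine encard_le_six_of_max_dist_le_dist (p := c i) hV (fun ⟨j, hj, hji⟩ ↦ hj.1 (hinj hji)) ?_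
  rintro _ ⟨j, hj, rfl⟩ _ ⟨k, hk, rfl⟩ hjk
  rw [hj.2, hk.2, max_self]
  exact hsep (ne_of_apply_ne c hjk)

end InnerProductSpace

/-- If `c : V → ℝ²` is injective and any two distinct points of its image are at
distance at least 2 (pairwise internally disjoint unit disks), then every `v ∈ V`
has at most 6 elements `u` with `dist (c u) (c v) = 2`: a graph admitting a weak
unit disk contact representation has maximum degree at most 6. -/
theorem weak_udcr_max_degree_six {V : Type*} (c : V → EuclideanSpace ℝ (Fin 2))
    (hinj : Function.Injective c)
    (hsep : ∀ u v : V, u ≠ v → 2 ≤ dist (c u) (c v)) :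
    ∀ v : V, {u : V | u ≠ v ∧ dist (c u) (c v) = 2}.Finite ∧
      {u : V | u ≠ v ∧ dist (c u) (c v) = 2}.ncard ≤ 6 := by
  intro v
  exact Set.encard_le_coe_iff_finite_ncard_le.mp <|
    weak_udcr_max_degree_six_general finrank_euclideanSpace_fin c two_pos hsep v
end
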